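/- arXiv:1003.2245 — 6 statements merged into one kernel-verified Lean document; each statement's English description precedes it below -/
import Mathlib

section
/- Let K ≥ 1 and let δ_1, …, δ_K be real numbers with 0 ≤ δ_i < 1 for every i and Σ_{i=1}^K δ_i = m for an integer m ≥ 1. Then there exists a probability distribution p over the m-element subsets of {1, …, K} such that for every i ∈ {1, …, K}, the probability that a subset drawn from p contains i is exactly δ_i. -/
/-!
The vectors `x ∈ [0,1]^K` with `∑ x i = m` form a compact convex polytope (the hypersimplex), so by
Krein–Milman it is the closed convex hull of its extreme points. An extreme point has only `0`/`1`
coordinates: since the coordinates sum to an integer, a coordinate strictly between `0` and `1` is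
accompanied by a second one, and moving a little mass back and forth between the two exhibits the
point as a proper midpoint (`eq_zero_or_one_of_mem_extremePoints`). Hence the extreme points are
among the finitely many indicators of `m`-element sets, whose convex hull is already closed.
The weights of a convex combination of indicators equal to `δ` are the required distribution.
-/

/-- The hypersimplex: points of the cube `[0,1]^K` whose coordinates sum to `m`. -/
def hypersimplex (K m : ℕ) : Set (Fin K → ℝ) :=
  {x | (∀ i, x i ∈ Set.Icc (0 : ℝ) 1) ∧ ∑ i, x i = m}

/-- The `0`/`1` indicator vector of a subset of `Fin K`. -/
def indicatorVec {K : ℕ} (S : Finset (Fin K)) : Fin K → ℝ := fun i => if i ∈ S then 1 else 0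

lemma indicatorVec_injective {K : ℕ} : Function.Injective (indicatorVec (K := K)) := by
  intro S T h
  ext i
  have hi := congrFun h i
  simp only [indicatorVec] at hi
  split_ifs at hi <;> simp_all

lemma isCompact_hypersimplex (K m : ℕ) : IsCompact (hypersimplex K m) := by
  have h1 : IsCompact (Set.univ.pi fun _ : Fin K => Set.Icc (0 : ℝ) 1) :=
    isCompact_univ_pi fun _ => isCompact_Icc
  have h2 : IsClosed {x : Fin K → ℝ | ∑ i, x i = m} :=
    isClosed_eq (by fun_prop) continuous_const
  convert h1.inter_right h2 using 1
  ext x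
  simp only [hypersimplex, Set.mem_ofPred_eq, Set.mem_inter_iff, Set.mem_univ_pi]

lemma convex_hypersimplex (K m : ℕ) : Convex ℝ (hypersimplex K m) := by
  intro x hx y hy a b ha hb hab
  refine ⟨fun i => convex_Icc (0 : ℝ) 1 (hx.1 i) (hy.1 i) ha hb hab, ?_⟩
  simp only [Pi.add_apply, Pi.smul_apply, smul_eq_mul, Finset.sum_add_distrib, ← Finset.mul_sum,
    hx.2, hy.2, ← add_mul, hab, one_mul]

/-- As the coordinates sum to an integer, a fractional coordinate is never the only one. -/
lemma exists_ne_fractional {K m : ℕ} {x : Fin K → ℝ} (hx : x ∈ hypersimplex K m) {i : Fin K}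
    (h0 : x i ≠ 0) (h1 : x i ≠ 1) : ∃ j, j ≠ i ∧ x j ≠ 0 ∧ x j ≠ 1 := by
  by_contra! h
  have hs : ∑ j ∈ Finset.univ.erase i, x j
      = (((Finset.univ.erase i).filter fun j => x j = 1).card : ℝ) := by
    rw [Finset.card_filter]
    push_cast
    refine Finset.sum_congr rfl fun j hj => ?_
    by_cases hj0 : x j = 0
    · simp [hj0]
    · simp [h j (Finset.ne_of_mem_erase hj) hj0]
  have ht := Finset.add_sum_erase Finset.univ x (Finset.mem_univ i)
  rw [hs, hx.2] at ht
  set n := ((Finset.univ.erase i).filter fun j => x j = 1).card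
  have hpos : 0 < x i := lt_of_le_of_ne (hx.1 i).1 h0.symm
  have hlt : x i < 1 := lt_of_le_of_ne (hx.1 i).2 h1
  have a1 : (n : ℝ) < m := by linarith
  have a2 : (m : ℝ) < (n + 1 : ℕ) := by push_cast; linarith
  have b1 : n < m := by exact_mod_cast a1
  have b2 : m < n + 1 := by exact_mod_cast a2
  omega

/-- Adding `t` to coordinate `i` and subtracting it from coordinate `j` stays in the hypersimplex
as long as these two coordinates stay in `[0,1]`. -/
lemma shift_mem {K m : ℕ} {x : Fin K → ℝ} (hx : x ∈ hypersimplex K m) {i j : Fin K} (hij : j ≠ i)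
    {t : ℝ} (hi : x i + t ∈ Set.Icc (0 : ℝ) 1) (hj : x j - t ∈ Set.Icc (0 : ℝ) 1) :
    x + (Pi.single i t - Pi.single j t) ∈ hypersimplex K m := by
  refine ⟨fun k => ?_, ?_⟩
  · by_cases hki : k = i
    · subst hki
      simpa [hij.symm] using hi
    · by_cases hkj : k = j
      · subst hkj
        simpa [hki, sub_eq_add_neg] using hj
      · simpa [hki, hkj] using hx.1 k
  · simp [Finset.sum_add_distrib, hx.2]

lemma eq_zero_or_one_of_mem_extremePoints {K m : ℕ} {x : Fin K → ℝ}
    (hx : x ∈ (hypersimplex K m).extremePoints ℝ) (i : Fin K) : x i = 0 ∨ x i = 1 := by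
  by_contra! h
  obtain ⟨hxm, hext⟩ := mem_extremePoints.1 hx
  obtain ⟨j, hij, hj0, hj1⟩ := exists_ne_fractional hxm h.1 h.2
  have pi0 : 0 < x i := lt_of_le_of_ne (hxm.1 i).1 h.1.symm
  have pi1 : x i < 1 := lt_of_le_of_ne (hxm.1 i).2 h.2
  have pj0 : 0 < x j := lt_of_le_of_ne (hxm.1 j).1 hj0.symm
  have pj1 : x j < 1 := lt_of_le_of_ne (hxm.1 j).2 hj1
  obtain ⟨t, ht, ht'⟩ : ∃ t : ℝ, 0 < t ∧ t < min (min (x i) (1 - x i)) (min (x j) (1 - x j)) :=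
    exists_between (by simp [pi0, pi1, pj0, pj1])
  simp only [lt_min_iff] at ht'
  obtain ⟨⟨t1, t2⟩, t3, t4⟩ := ht'
  have hp := shift_mem hxm hij (t := t) ⟨by linarith, by linarith⟩ ⟨by linarith, by linarith⟩
  have hn := shift_mem hxm hij (t := -t) ⟨by linarith, by linarith⟩ ⟨by linarith, by linarith⟩
  have hmid : x ∈ openSegment ℝ (x + (Pi.single i t - Pi.single j t))
      (x + (Pi.single i (-t) - Pi.single j (-t))) := by
    refine ⟨1 / 2, 1 / 2, by norm_num, by norm_num, by norm_num, ?_⟩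
    ext k
    simp only [Pi.single_neg, Pi.add_apply, Pi.smul_apply, Pi.sub_apply, Pi.neg_apply, smul_eq_mul]
    ring
  have heq := congrFun (hext _ hp _ hn hmid).1 i
  simp [hij.symm] at heq
  exact ht.ne' heq

lemma extremePoints_hypersimplex_subset (K m : ℕ) :
    (hypersimplex K m).extremePoints ℝ ⊆
      ((Finset.univ.powersetCard m).image (indicatorVec (K := K)) : Finset (Fin K → ℝ)) := by
  intro x hx
  have h01 := eq_zero_or_one_of_mem_extremePoints hx
  have hxS : indicatorVec (Finset.univ.filter fun i => x i = 1) = x := by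
    ext i
    rcases h01 i with h | h <;> simp [indicatorVec, h]
  rw [Finset.mem_coe, Finset.mem_image]
  refine ⟨_, ?_, hxS⟩
  rw [Finset.mem_powersetCard]
  refine ⟨Finset.subset_univ _, ?_⟩
  have hs := hx.1.2
  rw [← hxS] at hs
  simp only [indicatorVec, Finset.sum_boole, Finset.filter_mem_eq_inter, Finset.univ_inter] at hs
  exact_mod_cast hs

lemma hypersimplex_subset_convexHull (K m : ℕ) :
    hypersimplex K m ⊆ convexHull ℝ
      ((Finset.univ.powersetCard m).image (indicatorVec (K := K)) : Finset (Fin K → ℝ)) := by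
  rw [← closure_convexHull_extremePoints (isCompact_hypersimplex K m) (convex_hypersimplex K m)]
  exact closure_minimal (convexHull_mono (extremePoints_hypersimplex_subset K m))
    ((Finset.finite_toSet _).isClosed_convexHull ℝ)

/-- There is a probability distribution over the `m`-element subsets of `{1,…,K}`
whose marginals match any prescribed `δ_i ∈ [0,1)` summing to `m`. -/
theorem stmt_0 (K : ℕ) (hK : 1 ≤ K) (m : ℕ) (hm : 1 ≤ m)
    (δ : Fin K → ℝ) (hδ0 : ∀ i, 0 ≤ δ i) (hδ1 : ∀ i, δ i < 1)
    (hsum : ∑ i, δ i = (m : ℝ)) :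
    ∃ p : Finset (Fin K) → ℝ,
      (∀ S, 0 ≤ p S) ∧
      (∀ S, p S ≠ 0 → S.card = m) ∧
      (∑ S : Finset (Fin K), p S = 1) ∧
      (∀ i : Fin K,
        ∑ S ∈ Finset.univ.filter (fun S : Finset (Fin K) => i ∈ S), p S = δ i) := by
  have hδ := hypersimplex_subset_convexHull K m ⟨fun i => ⟨hδ0 i, (hδ1 i).le⟩, hsum⟩
  rw [Finset.mem_convexHull'] at hδ
  obtain ⟨w, hw0, hw1, hwδ⟩ := hδ
  rw [Finset.sum_image indicatorVec_injective.injOn] at hw1 hwδ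
  have hfilter : (Finset.univ.powersetCard m : Finset (Finset (Fin K)))
      = Finset.univ.filter fun S => S.card = m := by
    ext S
    simp [Finset.mem_powersetCard]
  rw [hfilter, Finset.sum_filter] at hw1 hwδ
  refine ⟨fun S => if S.card = m then w (indicatorVec S) else 0, fun S => ?_, fun S hS => ?_,
    hw1, fun i => ?_⟩
  · dsimp only
    split_ifs with h
    · exact hw0 _ (Finset.mem_image_of_mem _ (by simp [Finset.mem_powersetCard, h]))
    · exact le_rfl
  · by_contra h
    simp [h] at hS
  · rw [← hwδ, Finset.sum_filter, Finset.sum_apply]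
    refine Finset.sum_congr rfl fun S _ => ?_
    by_cases h : S.card = m <;> by_cases hi : i ∈ S <;> simp [h, hi, indicatorVec]
end

section
/- For every real number x with x ≤ 1, exp(x) ≤ 1 + x + (e − 2)·x², where e is Euler's number. -/
/-!
For `|x| ≤ 1` the inequality is a termwise comparison of exponential series: the tail of `exp x`
from degree two on is `∑ x ^ (n + 2) / (n + 2)!`, and `x ^ (n + 2) ≤ x ^ 2`, so the tail is at most
`x ^ 2 * ∑ 1 / (n + 2)! = (e - 2) * x ^ 2`. For `x < -1` crude bounds suffice: the left side is at
most `e⁻¹ < 1 / 2`, while `e - 2 > 1 / 2` and `1 + x + x ^ 2 / 2 = 1 / 2 + (1 + x) ^ 2 / 2`.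
-/

theorem hasSum_exp_tail (x : ℝ) :
    HasSum (fun n : ℕ => x ^ (n + 2) / ((n + 2).factorial : ℝ)) (Real.exp x - 1 - x) := by
  have h : HasSum (fun n : ℕ => x ^ n / (n.factorial : ℝ)) (Real.exp x) := by
    rw [Real.exp_eq_exp_ℝ]
    exact NormedSpace.expSeries_div_hasSum_exp x
  have h2 := (hasSum_nat_add_iff' 2).mpr h
  simpa [Finset.sum_range_succ, sub_sub] using h2

/-- For every real `x ≤ 1`, `exp x ≤ 1 + x + (e - 2)·x²`. -/
theorem stmt_3 (x : ℝ) (hx : x ≤ 1) :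
    Real.exp x ≤ 1 + x + (Real.exp 1 - 2) * x ^ 2 := by
  rcases le_or_gt (-1) x with h | h
  · have hle := hasSum_le (fun n => ?_) (hasSum_exp_tail x)
      ((hasSum_exp_tail 1).mul_right (x ^ 2))
    · linarith
    · rw [div_mul_eq_mul_div, one_pow, one_mul]
      refine div_le_div_of_nonneg_right ?_ (by positivity)
      have hn : x ^ n ≤ 1 := by
        refine (le_abs_self _).trans ?_
        rw [abs_pow]
        exact pow_le_one₀ (abs_nonneg x) (abs_le.mpr ⟨h, hx⟩)
      rw [pow_add]
      exact mul_le_of_le_one_left (sq_nonneg x) hn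
  · have he := Real.exp_one_gt_d9
    have hinv : Real.exp x ≤ 1 / 2 := by
      have hmul : Real.exp (-1) * Real.exp 1 = 1 := by rw [← Real.exp_add]; simp
      have hmono := Real.exp_le_exp.mpr h.le
      nlinarith [Real.exp_pos (-1)]
    nlinarith [sq_nonneg (1 + x), mul_nonneg (by linarith : 0 ≤ Real.exp 1 - 5 / 2) (sq_nonneg x)]
end

section
/- Fix K ≥ 2, T ≥ 1 and 0 < η ≤ 1. Let g_1, …, g_T be any sequence of vectors in [0,1]^K, and define probability vectors x_1, …, x_T on {1, …, K} by x_{1,i} = 1/K and the exponentiated-gradient update x_{t+1,i} = x_{t,i}·exp(η g_{t,i}) / Σ_{j=1}^K x_{t,j}·exp(η g_{t,j}). Then for every probability vector q on {1, …, K}, Σ_{t=1}^T (q − x_t)·g_t ≤ KL(q‖x_1)/η + (e − 2)·η·T, where KL(q‖x_1) ≤ ln K. In particular, with η = √(ln K / ((e−2)T)), Σ_{t=1}^T (q − x_t)·g_t ≤ 3·√(T ln K). -/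
/-!
The Kullback–Leibler divergence `KL(q‖x_t)` is a potential. With `Z_t = ∑ j, x_t j * exp (η g_t j)`,
the update gives `log (x_{t+1,i} / x_{t,i}) = η g_{t,i} - log Z_t`, so the divergence drops in one
step by exactly `η q·g_t - log Z_t`. On `[0,1]` one has `exp z ≤ 1 + z + (e - 2) z²`
(`exp_le_quadratic`), so `log Z_t ≤ η x_t·g_t + (e - 2) η²` (`log_normalizer_le`); hence the drop is
at least `η (q - x_t)·g_t - (e - 2) η²`. Telescoping, and using Gibbs' inequality
`KL(q‖x_T) ≥ 0` (`gibbs`), gives the regret bound after division by `η`. The tuned bound comes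
from balancing the two terms: both then equal `(e - 2) η T = √((e - 2) T ln K)`, and
`2 √(e - 2) ≤ 3`.
-/

/-- The constant `e - 2` is `∑ n, 1 / (n + 2)!`; comparing exponential series termwise, with
`z ^ (n + 2) ≤ z ^ 2`, gives the bound. -/
lemma exp_le_quadratic {z : ℝ} (h0 : 0 ≤ z) (h1 : z ≤ 1) :
    Real.exp z ≤ 1 + z + (Real.exp 1 - 2) * z ^ 2 := by
  have key (y : ℝ) : HasSum (fun n : ℕ => y ^ (n + 2) / ((n + 2).factorial : ℝ))
      (Real.exp y - (1 + y)) := by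
    have h := NormedSpace.expSeries_div_hasSum_exp (𝔸 := ℝ) y
    rw [← Real.exp_eq_exp_ℝ, ← hasSum_nat_add_iff' 2] at h
    simpa [Finset.sum_range_succ] using h
  have h := hasSum_le (fun n => ?_) (key z) ((key 1).mul_right (z ^ 2))
  · linarith
  · have : z ^ n ≤ 1 := pow_le_one₀ h0 h1
    rw [one_pow, div_mul_eq_mul_div, one_mul, pow_add]
    gcongr
    nlinarith [sq_nonneg z]

lemma log_normalizer_le {ι : Type*} [Fintype ι] {η : ℝ} (hη0 : 0 < η) (hη1 : η ≤ 1)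
    {g p : ι → ℝ} (hg : ∀ i, 0 ≤ g i ∧ g i ≤ 1) (hp0 : ∀ i, 0 ≤ p i) (hp1 : ∑ i, p i = 1)
    (hZ : 0 < ∑ i, p i * Real.exp (η * g i)) :
    Real.log (∑ i, p i * Real.exp (η * g i)) ≤
      η * ∑ i, p i * g i + (Real.exp 1 - 2) * η ^ 2 := by
  have he : 0 ≤ Real.exp 1 - 2 := by linarith [Real.exp_one_gt_d9]
  have h1 : ∑ i, p i * Real.exp (η * g i) ≤
      ∑ i, (p i + η * (p i * g i) + p i * ((Real.exp 1 - 2) * η ^ 2)) := by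
    refine Finset.sum_le_sum fun i _ => ?_
    obtain ⟨a, b⟩ := hg i
    have h2 := exp_le_quadratic (z := η * g i) (by positivity) (mul_le_one₀ hη1 a b)
    have h3 : (Real.exp 1 - 2) * (η * g i) ^ 2 ≤ (Real.exp 1 - 2) * η ^ 2 := by
      gcongr
      exact mul_le_of_le_one_right hη0.le b
    nlinarith [mul_le_mul_of_nonneg_left (h2.trans (add_le_add_right h3 _)) (hp0 i)]
  rw [Finset.sum_add_distrib, Finset.sum_add_distrib, ← Finset.mul_sum, ← Finset.sum_mul,
    hp1] at h1
  linarith [Real.log_le_sub_one_of_pos hZ]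

/-- Gibbs' inequality, in the form `∑ q log p ≤ ∑ q log q`. -/
lemma gibbs {ι : Type*} [Fintype ι] {p q : ι → ℝ} (hp0 : ∀ i, 0 < p i) (hp1 : ∑ i, p i = 1)
    (hq0 : ∀ i, 0 ≤ q i) (hq1 : ∑ i, q i = 1) :
    ∑ i, q i * Real.log (p i) ≤ ∑ i, q i * Real.log (q i) := by
  have h : ∀ i, q i * Real.log (p i) - q i * Real.log (q i) ≤ p i - q i := by
    intro i
    rcases (hq0 i).eq_or_lt with h | h
    · simpa [← h] using (hp0 i).le
    · have h2 := mul_le_mul_of_nonneg_left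
        (Real.log_le_sub_one_of_pos (div_pos (hp0 i) h)) h.le
      rw [Real.log_div (hp0 i).ne' h.ne', mul_sub, mul_sub, mul_div_cancel₀ _ h.ne'] at h2
      linarith
  have := Finset.sum_le_sum fun i (_ : i ∈ Finset.univ) => h i
  rw [Finset.sum_sub_distrib, Finset.sum_sub_distrib, hp1, hq1] at this
  linarith


/-- Regret bound for the exponentiated-gradient update with gradients in `[0,1]^K`:
for every probability vector `q`,
`∑_{t<T} (q - x_t)·g_t ≤ KL(q‖x_0)/η + (e-2)·η·T`, with `KL(q‖x_0) ≤ ln K`;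
and with `η = √(ln K/((e-2)T))` the regret is at most `3√(T ln K)`. -/
theorem stmt_4 (K T : ℕ) (hK : 2 ≤ K) (hT : 1 ≤ T)
    (η : ℝ) (hη0 : 0 < η) (hη1 : η ≤ 1)
    (g : ℕ → Fin K → ℝ) (hg : ∀ t i, 0 ≤ g t i ∧ g t i ≤ 1)
    (x : ℕ → Fin K → ℝ)
    (hx0 : ∀ i, x 0 i = 1 / K)
    (hxup : ∀ t i, x (t + 1) i =
      x t i * Real.exp (η * g t i) / ∑ j, x t j * Real.exp (η * g t j))
    (q : Fin K → ℝ) (hq0 : ∀ i, 0 ≤ q i) (hq1 : ∑ i, q i = 1) :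
    (∑ t ∈ Finset.range T, ∑ i, (q i - x t i) * g t i ≤
        (∑ i, q i * Real.log (q i / x 0 i)) / η + (Real.exp 1 - 2) * η * T) ∧
    ((∑ i, q i * Real.log (q i / x 0 i)) ≤ Real.log K) ∧
    (η = Real.sqrt (Real.log K / ((Real.exp 1 - 2) * T)) →
      ∑ t ∈ Finset.range T, ∑ i, (q i - x t i) * g t i ≤
        3 * Real.sqrt (T * Real.log K)) := by

  have hKpos : (0 : ℝ) < K := by exact_mod_cast (by omega : 0 < K)
  have : NeZero K := ⟨by omega⟩
  have hx : ∀ t, (∀ i, 0 < x t i) ∧ ∑ i, x t i = 1 := by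
    intro t
    induction t with
    | zero => simp [hx0, hKpos, hKpos.ne']
    | succ t ih =>
      have hZ : 0 < ∑ j, x t j * Real.exp (η * g t j) :=
        Finset.sum_pos (fun j _ => mul_pos (ih.1 j) (Real.exp_pos _)) Finset.univ_nonempty
      refine ⟨fun i => ?_, ?_⟩
      · rw [hxup]
        exact div_pos (mul_pos (ih.1 i) (Real.exp_pos _)) hZ
      · simp_rw [hxup, ← Finset.sum_div]
        exact div_self hZ.ne'
  have hstep : ∀ t, η * ∑ i, (q i - x t i) * g t i ≤
      (∑ i, q i * Real.log (x (t + 1) i) - ∑ i, q i * Real.log (x t i)) +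
        (Real.exp 1 - 2) * η ^ 2 := by
    intro t
    have hZ : 0 < ∑ j, x t j * Real.exp (η * g t j) :=
      Finset.sum_pos (fun j _ => mul_pos ((hx t).1 j) (Real.exp_pos _)) Finset.univ_nonempty
    have hlog := log_normalizer_le hη0 hη1 (hg t) (fun i => ((hx t).1 i).le) (hx t).2 hZ
    have hdrop : ∑ i, q i * Real.log (x (t + 1) i) = ∑ i, q i * Real.log (x t i) +
        η * ∑ i, q i * g t i - Real.log (∑ j, x t j * Real.exp (η * g t j)) := by
      have hi : ∀ i, q i * Real.log (x (t + 1) i) = q i * Real.log (x t i) +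
          η * (q i * g t i) - q i * Real.log (∑ j, x t j * Real.exp (η * g t j)) := by
        intro i
        rw [hxup, Real.log_div (mul_pos ((hx t).1 i) (Real.exp_pos _)).ne' hZ.ne',
          Real.log_mul ((hx t).1 i).ne' (Real.exp_pos _).ne', Real.log_exp]
        ring
      simp_rw [hi]
      rw [Finset.sum_sub_distrib, Finset.sum_add_distrib, ← Finset.mul_sum, ← Finset.sum_mul,
        hq1, one_mul]
    simp_rw [sub_mul]
    rw [Finset.sum_sub_distrib, hdrop]
    linarith
  have hKL : ∑ i, q i * Real.log (q i / x 0 i) =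
      ∑ i, q i * Real.log (q i) - ∑ i, q i * Real.log (x 0 i) := by
    rw [← Finset.sum_sub_distrib]
    refine Finset.sum_congr rfl fun i _ => ?_
    rcases (hq0 i).eq_or_lt with h | h
    · simp [← h]
    · rw [Real.log_div h.ne' ((hx 0).1 i).ne']
      ring
  have hKLle : ∑ i, q i * Real.log (q i / x 0 i) ≤ Real.log K := by
    have h0 : ∑ i, q i * Real.log (x 0 i) = - Real.log K := by
      simp_rw [hx0]
      rw [← Finset.sum_mul, hq1]
      simp
    have h1 : ∑ i, q i * Real.log (q i) ≤ 0 := by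
      refine Finset.sum_nonpos fun i _ => mul_nonpos_of_nonneg_of_nonpos (hq0 i) ?_
      refine Real.log_nonpos (hq0 i) ?_
      rw [← hq1]
      exact Finset.single_le_sum (fun j _ => hq0 j) (Finset.mem_univ i)
    rw [hKL, h0]
    linarith
  have hreg : ∑ t ∈ Finset.range T, ∑ i, (q i - x t i) * g t i ≤
      (∑ i, q i * Real.log (q i / x 0 i)) / η + (Real.exp 1 - 2) * η * T := by
    have hsum := Finset.sum_le_sum fun t (_ : t ∈ Finset.range T) => hstep t
    rw [← Finset.mul_sum, Finset.sum_add_distrib,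
      Finset.sum_range_sub (fun t => ∑ i, q i * Real.log (x t i)), Finset.sum_const,
      Finset.card_range, nsmul_eq_mul] at hsum
    have hG := gibbs (hx T).1 (hx T).2 hq0 hq1
    rw [div_add' _ _ _ hη0.ne', le_div_iff₀ hη0, hKL]
    linarith
  refine ⟨hreg, hKLle, fun hη => hreg.trans ?_⟩
  have hT0 : (0 : ℝ) < T := by exact_mod_cast (by omega : 0 < T)
  have hc0 : 0 < Real.exp 1 - 2 := by linarith [Real.exp_one_gt_d9]
  have hc1 : Real.exp 1 - 2 ≤ 1 := by linarith [Real.exp_one_lt_d9]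
  have hL : 0 ≤ Real.log K := Real.log_natCast_nonneg K
  have hsq : (Real.exp 1 - 2) * η ^ 2 * T = Real.log K := by
    rw [hη, Real.sq_sqrt (by positivity)]
    field_simp
  -- The tuned `η` makes `ln K / η` equal to the second term `(e - 2) η T`.
  have hbal : Real.log K / η = (Real.exp 1 - 2) * η * T := by
    rw [div_eq_iff hη0.ne', ← hsq]
    ring
  have hdiv : (∑ i, q i * Real.log (q i / x 0 i)) / η ≤ (Real.exp 1 - 2) * η * T :=
    (div_le_div_of_nonneg_right hKLle hη0.le).trans_eq hbal
  have hroot : (Real.exp 1 - 2) * η * T ≤ Real.sqrt (T * Real.log K) := by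
    apply Real.le_sqrt_of_sq_le
    calc ((Real.exp 1 - 2) * η * T) ^ 2
        = (Real.exp 1 - 2) * (T * ((Real.exp 1 - 2) * η ^ 2 * T)) := by ring
      _ = (Real.exp 1 - 2) * (T * Real.log K) := by rw [hsq]
      _ ≤ T * Real.log K := mul_le_of_le_one_left (by positivity) hc1
  linarith [Real.sqrt_nonneg (T * Real.log K)]
end

section
/- In the dark pool setting, run the exponentiated-gradient algorithm with learning rate η = √(ln K / ((e−2)T)). Then for every sequence of integer volumes V^t ∈ {0, …, V} and integer maximum consumption levels s_i^t, and for every comparator opt ∈ {1, …, K}^V, the regret satisfies Σ_{t=1}^T Σ_{i=1}^K [ min(Σ_{v=1}^{V^t} 1(opt_v = i), s_i^t) − min(u_i^t, s_i^t) ] ≤ 3·V·√(T ln K). -/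
/-!
The reward of a venue is concave in the allocation and `g t i` is a supergradient at `u t i`, so the
regret is at most the linearized regret `∑ t, ∑ i, g t i * (n t i - u t i)`, where `n t i` is the
comparator's allocation. Both allocations are sums over units, so this splits into one
prediction-with-experts regret per unit `v < V`, with gains `gv t v` in `[0, 1]`.

For `η ≤ 1`, the inequality `exp y ≤ 1 + y + y ^ 2` on `[0, 1]` shows that a step of the algorithm
multiplies the weight of expert `o` by at least `exp (η * (γ o - ⟨p, γ⟩) - η ^ 2)`. The weight starts
at `1 / K` and never exceeds `1`, so `η * R ≤ log K + η ^ 2 * T` for the regret `R` of one unit.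
With `a = e - 2` and `b = √a`, the learning rate satisfies `log K = a * η ^ 2 * T` and
`√(T * log K) = b * η * T`, and `1 / 2 ≤ b ≤ 1` yields `R ≤ 3 * √(T * log K)`.
For `η > 1` the trivial bound `R ≤ T` suffices.
-/

/-- The multiplicative-weights update keeps the weights a positive probability vector. -/
lemma eg_prob {K : ℕ} (hK : 2 ≤ K) (η : ℝ) (p γ : ℕ → Fin K → ℝ)
    (hp0 : ∀ i, p 0 i = 1 / K)
    (hup : ∀ t i, p (t + 1) i =
      p t i * Real.exp (η * γ t i) / ∑ j, p t j * Real.exp (η * γ t j)) (t : ℕ) :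
    (∀ i, 0 < p t i) ∧ ∑ i, p t i = 1 := by
  have hK0 : (0 : ℝ) < K := by exact_mod_cast (by omega : 0 < K)
  haveI : Nonempty (Fin K) := ⟨⟨0, by omega⟩⟩
  induction t with
  | zero =>
    refine ⟨fun i => by rw [hp0]; positivity, ?_⟩
    simp only [hp0, Finset.sum_const, Finset.card_univ, Fintype.card_fin, nsmul_eq_mul]
    field_simp
  | succ t ih =>
    have hZ : 0 < ∑ j, p t j * Real.exp (η * γ t j) :=
      Finset.sum_pos (fun j _ => mul_pos (ih.1 j) (Real.exp_pos _)) Finset.univ_nonempty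
    refine ⟨fun i => by rw [hup]; exact div_pos (mul_pos (ih.1 i) (Real.exp_pos _)) hZ, ?_⟩
    simp only [hup, ← Finset.sum_div]
    exact div_self hZ.ne'

/-- Regret bound for exponentiated gradient with gains in `[0, 1]` and `η ≤ 1`, with constant `1`
in place of the sharper `e - 2` in front of `η ^ 2 * T`. -/
lemma eg_regret {K : ℕ} (hK : 2 ≤ K) (η : ℝ) (hη0 : 0 ≤ η) (hη1 : η ≤ 1)
    (p γ : ℕ → Fin K → ℝ) (hγ0 : ∀ t i, 0 ≤ γ t i) (hγ1 : ∀ t i, γ t i ≤ 1)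
    (hp0 : ∀ i, p 0 i = 1 / K)
    (hup : ∀ t i, p (t + 1) i =
      p t i * Real.exp (η * γ t i) / ∑ j, p t j * Real.exp (η * γ t j))
    (o : Fin K) (T : ℕ) :
    η * ∑ t ∈ Finset.range T, (γ t o - ∑ i, p t i * γ t i) ≤ Real.log K + η ^ 2 * T := by
  have hK0 : (0 : ℝ) < K := by exact_mod_cast (by omega : 0 < K)
  haveI : Nonempty (Fin K) := ⟨⟨0, by omega⟩⟩
  have hprob := eg_prob hK η p γ hp0 hup
  have key : η * ∑ t ∈ Finset.range T, (γ t o - ∑ i, p t i * γ t i) - η ^ 2 * T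
      ≤ Real.log (p T o) + Real.log K := by
    induction T with
    | zero => simp [hp0]
    | succ t ih =>
      obtain ⟨hpos, hsum⟩ := hprob t
      have hZ : 0 < ∑ j, p t j * Real.exp (η * γ t j) :=
        Finset.sum_pos (fun j _ => mul_pos (hpos j) (Real.exp_pos _)) Finset.univ_nonempty
      have hZle : ∑ j, p t j * Real.exp (η * γ t j) ≤ 1 + (η * ∑ i, p t i * γ t i + η ^ 2) := by
        calc ∑ j, p t j * Real.exp (η * γ t j)
            ≤ ∑ j, (p t j + η * (p t j * γ t j) + η ^ 2 * p t j) := by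
              refine Finset.sum_le_sum fun j _ => ?_
              have h0 : 0 ≤ η * γ t j := mul_nonneg hη0 (hγ0 t j)
              have h1 : η * γ t j ≤ η := mul_le_of_le_one_right hη0 (hγ1 t j)
              have h2 := Real.abs_exp_sub_one_sub_id_le
                (x := η * γ t j) (by rw [abs_of_nonneg h0]; linarith)
              have h3 := (abs_le.mp h2).2
              have h4 : (η * γ t j) ^ 2 ≤ η ^ 2 := pow_le_pow_left₀ h0 h1 2
              have h5 : Real.exp (η * γ t j) ≤ 1 + η * γ t j + η ^ 2 := by linarith
              have h6 := mul_le_mul_of_nonneg_left h5 (hpos j).le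
              linarith
          _ = 1 + (η * ∑ i, p t i * γ t i + η ^ 2) := by
              rw [Finset.sum_add_distrib, Finset.sum_add_distrib, ← Finset.mul_sum,
                ← Finset.mul_sum, hsum]
              ring
      have hlogZ := Real.log_le_sub_one_of_pos hZ
      have hlog : Real.log (p (t + 1) o) = Real.log (p t o) + η * γ t o
          - Real.log (∑ j, p t j * Real.exp (η * γ t j)) := by
        rw [hup, Real.log_div (mul_pos (hpos o) (Real.exp_pos _)).ne' hZ.ne',
          Real.log_mul (hpos o).ne' (Real.exp_pos _).ne', Real.log_exp]
      rw [Finset.sum_range_succ, hlog]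
      push_cast
      linarith
  obtain ⟨hpos, hsum⟩ := hprob T
  have hle : p T o ≤ 1 := by
    rw [← hsum]
    exact Finset.single_le_sum (fun i _ => (hpos i).le) (Finset.mem_univ o)
  have := Real.log_nonpos (hpos o).le hle
  linarith

/-- The single-unit regret bound at the tuned learning rate, without any restriction on its size. -/
lemma eg_regret_tuned {K : ℕ} (hK : 2 ≤ K) (T : ℕ) (hT : 1 ≤ T) (η : ℝ)
    (hη : η = Real.sqrt (Real.log K / ((Real.exp 1 - 2) * T)))
    (p γ : ℕ → Fin K → ℝ) (hγ0 : ∀ t i, 0 ≤ γ t i) (hγ1 : ∀ t i, γ t i ≤ 1)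
    (hp0 : ∀ i, p 0 i = 1 / K)
    (hup : ∀ t i, p (t + 1) i =
      p t i * Real.exp (η * γ t i) / ∑ j, p t j * Real.exp (η * γ t j))
    (o : Fin K) :
    ∑ t ∈ Finset.range T, (γ t o - ∑ i, p t i * γ t i)
      ≤ 3 * Real.sqrt ((T : ℝ) * Real.log K) := by
  have hT0 : (0 : ℝ) < T := by exact_mod_cast (by omega : 0 < T)
  have hL : 0 < Real.log K := Real.log_pos (by exact_mod_cast (by omega : 1 < K))
  have he1 := Real.exp_one_gt_d9
  have he2 := Real.exp_one_lt_d9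
  have ha0 : 0 < Real.exp 1 - 2 := by linarith
  set b := Real.sqrt (Real.exp 1 - 2) with hb
  have hbsq : b ^ 2 = Real.exp 1 - 2 := Real.sq_sqrt ha0.le
  have hb1 : 1 / 2 ≤ b := Real.le_sqrt_of_sq_le (by linarith)
  have hb2 : b ≤ 1 := Real.sqrt_le_one.mpr (by linarith)
  have hηpos : 0 < η := by rw [hη]; positivity
  have hLeq : Real.log K = b ^ 2 * η ^ 2 * T := by
    rw [hbsq, hη, Real.sq_sqrt (by positivity)]
    field_simp
  have hS : Real.sqrt ((T : ℝ) * Real.log K) = b * η * T := by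
    rw [hLeq, show (T : ℝ) * (b ^ 2 * η ^ 2 * T) = (b * η * T) ^ 2 by ring]
    exact Real.sqrt_sq (by positivity)
  rw [hS]
  rcases le_or_gt η 1 with h1 | h1
  · have h := eg_regret hK η hηpos.le h1 p γ hγ0 hγ1 hp0 hup o T
    rw [hLeq] at h
    refine le_of_mul_le_mul_left (h.trans ?_) hηpos
    have hq : b ^ 2 + 1 ≤ 3 * b := by nlinarith
    have := mul_le_mul_of_nonneg_right hq (by positivity : 0 ≤ η ^ 2 * T)
    linarith
  · have hR : ∑ t ∈ Finset.range T, (γ t o - ∑ i, p t i * γ t i) ≤ T := by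
      have : ∑ t ∈ Finset.range T, (γ t o - ∑ i, p t i * γ t i)
          ≤ ∑ _t ∈ Finset.range T, (1 : ℝ) := by
        refine Finset.sum_le_sum fun t _ => ?_
        have h2 : 0 ≤ ∑ i, p t i * γ t i := Finset.sum_nonneg fun i _ =>
          mul_nonneg ((eg_prob hK η p γ hp0 hup t).1 i).le (hγ0 t i)
        linarith [hγ1 t o]
      simpa using this
    refine hR.trans ?_
    have hq : 1 ≤ 3 * (b * η) := by nlinarith
    have := mul_le_mul_of_nonneg_right hq hT0.le
    linarith


/-- Regret bound for the exponentiated-gradient algorithm in the dark pool problem: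
against any adversarial sequence of volumes `Vol t ≤ V` and maximum consumption
levels `s t i`, and any fixed allocation strategy `opt` (allocating the `v`-th unit
to venue `opt v`), the regret over `T` rounds is at most `3·V·√(T ln K)`. -/
theorem stmt_5 (K T V : ℕ) (hK : 2 ≤ K) (hT : 1 ≤ T) (hV : 1 ≤ V)
    (Vol : ℕ → ℕ) (hVol : ∀ t, Vol t ≤ V)
    (s : ℕ → Fin K → ℕ)
    (η : ℝ) (hη : η = Real.sqrt (Real.log K / ((Real.exp 1 - 2) * T)))
    (x : ℕ → ℕ → Fin K → ℝ) (u g : ℕ → Fin K → ℝ) (gv : ℕ → ℕ → Fin K → ℝ)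
    (hx0 : ∀ v i, x 0 v i = 1 / K)
    (hu : ∀ t i, u t i = ∑ v ∈ Finset.range (Vol t), x t v i)
    (hg : ∀ t i, g t i = if u t i ≤ (s t i : ℝ) then 1 else 0)
    (hgv : ∀ t v i, gv t v i = if v < Vol t then g t i else 0)
    (hxup : ∀ t v i, x (t + 1) v i =
      x t v i * Real.exp (η * gv t v i) / ∑ j, x t v j * Real.exp (η * gv t v j))
    (opt : ℕ → Fin K) :
    ∑ t ∈ Finset.range T, ∑ i,
        (min (∑ v ∈ Finset.range (Vol t), if opt v = i then (1 : ℝ) else 0) ((s t i : ℕ) : ℝ)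
          - min (u t i) ((s t i : ℕ) : ℝ))
      ≤ 3 * (V : ℝ) * Real.sqrt ((T : ℝ) * Real.log K) := by
  have hg01 : ∀ t i, 0 ≤ g t i ∧ g t i ≤ 1 := by
    intro t i
    rw [hg]
    split_ifs <;> norm_num
  have hround : ∀ t, ∑ i,
        (min (∑ v ∈ Finset.range (Vol t), if opt v = i then (1 : ℝ) else 0) ((s t i : ℕ) : ℝ)
          - min (u t i) ((s t i : ℕ) : ℝ))
      ≤ ∑ v ∈ Finset.range V, (gv t v (opt v) - ∑ i, x t v i * gv t v i) := by
    intro t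
    calc _ ≤ ∑ i, g t i * ((∑ v ∈ Finset.range (Vol t), if opt v = i then (1 : ℝ) else 0)
            - u t i) := by
          refine Finset.sum_le_sum fun i _ => ?_
          rw [hg]
          split_ifs with h
          · rw [min_eq_left h]
            linarith [min_le_left (∑ v ∈ Finset.range (Vol t), if opt v = i then (1 : ℝ) else 0)
              ((s t i : ℕ) : ℝ)]
          · rw [min_eq_right (not_le.mp h).le]
            linarith [min_le_right (∑ v ∈ Finset.range (Vol t), if opt v = i then (1 : ℝ) else 0)
              ((s t i : ℕ) : ℝ)]
      _ = ∑ v ∈ Finset.range (Vol t), (g t (opt v) - ∑ i, x t v i * g t i) := by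
          simp only [hu, ← Finset.sum_sub_distrib, Finset.mul_sum]
          rw [Finset.sum_comm]
          refine Finset.sum_congr rfl fun v _ => ?_
          simp [mul_sub, Finset.sum_sub_distrib, mul_comm]
      _ = ∑ v ∈ Finset.range (Vol t), (gv t v (opt v) - ∑ i, x t v i * gv t v i) := by
          refine Finset.sum_congr rfl fun v hv => ?_
          simp only [hgv, if_pos (Finset.mem_range.mp hv)]
      _ = _ := by
          -- Units beyond the current volume have zero gain.
          refine Finset.sum_subset (Finset.range_mono (hVol t)) fun v _ hv => ?_
          simp only [hgv, if_neg (fun h => hv (Finset.mem_range.mpr h))]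
          simp
  refine (Finset.sum_le_sum fun t _ => hround t).trans ?_
  rw [Finset.sum_comm]
  refine (Finset.sum_le_sum fun v _ => eg_regret_tuned hK T hT η hη (fun t => x t v)
    (fun t => gv t v) ?_ ?_ (hx0 v) (fun t i => hxup t v i) (opt v)).trans ?_
  · intro t i
    simp only [hgv]
    split_ifs
    exacts [(hg01 t i).1, le_rfl]
  · intro t i
    simp only [hgv]
    split_ifs
    exacts [(hg01 t i).2, zero_le_one]
  · rw [Finset.sum_const, Finset.card_range, nsmul_eq_mul]
    linarith
end

section
/- Let u ≥ 0 be a real number that is not an integer, let s be a nonnegative integer, write f = ⌊u⌋, and let δ̄ ∈ (0, 1]. Let B be a Bernoulli random variable with P(B = 1) = δ̄. Then E[ 1(s ≥ f) − 1(s = f)·B/δ̄ ] = 1(s ≥ u), and E[ 1(s ≥ u)·B/δ̄ ] = 1(s ≥ u). Consequently, in the randomized integral-allocation algorithm, both branches of the gradient estimate g̃_{t,i}^v (for v ≤ V_i^t and for V_i^t < v ≤ V^t) have conditional expectation equal to the true gradient 1(s_i^t ≥ u_i^t), so g̃_t is an unbiased estimator of the gradient of the reward at (u_1^t, …, u_K^t).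 -/
/-- At a non-integer `u` the indicator `1(s ≥ u)` is `1(s > ⌊u⌋)`: since `s = u` cannot
occur, `u ≤ s` is the same as `u < s`. -/
lemma le_natCast_iff_floor_lt {u : ℝ} (hu : 0 ≤ u) (hnotint : ∀ n : ℤ, u ≠ (n : ℝ)) (s : ℕ) :
    u ≤ (s : ℝ) ↔ ⌊u⌋₊ < s := by
  have hne : u ≠ (s : ℝ) := by exact_mod_cast hnotint s
  rw [Nat.floor_lt hu]
  exact ⟨fun h => lt_of_le_of_ne h hne, le_of_lt⟩


/-- Unbiasedness of both branches of the gradient estimate: if `u ≥ 0` is not an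
integer, `f = ⌊u⌋`, and `B` is Bernoulli with success probability `δ̄ ∈ (0,1]`, then
`E[1(s ≥ f) - 1(s = f)·B/δ̄] = 1(s ≥ u)` and `E[1(s ≥ u)·B/δ̄] = 1(s ≥ u)`. -/
theorem stmt_6 (u : ℝ) (hu : 0 ≤ u) (hnotint : ∀ n : ℤ, u ≠ (n : ℝ)) (s : ℕ)
    (δbar : ℝ) (hδ0 : 0 < δbar) (hδ1 : δbar ≤ 1) :
    (∑ b : Bool, (if b then δbar else 1 - δbar) *
        ((if ⌊u⌋₊ ≤ s then (1 : ℝ) else 0)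
          - (if s = ⌊u⌋₊ then (1 : ℝ) else 0) * (if b then (1 : ℝ) else 0) / δbar)
      = if u ≤ (s : ℝ) then 1 else 0) ∧
    (∑ b : Bool, (if b then δbar else 1 - δbar) *
        ((if u ≤ (s : ℝ) then (1 : ℝ) else 0) * (if b then (1 : ℝ) else 0) / δbar)
      = if u ≤ (s : ℝ) then 1 else 0) := by
  have hδ : δbar ≠ 0 := hδ0.ne'
  simp only [le_natCast_iff_floor_lt hu hnotint s, Fintype.sum_bool]
  constructor
  -- Only the position of `s` relative to `⌊u⌋` matters; for `s = ⌊u⌋` the correction `B / δbar`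
  -- has mean one and cancels the leading indicator.
  · rcases lt_trichotomy s ⌊u⌋₊ with h | h | h
    · simp [h.not_ge, h.ne, h.not_gt]
    · simp [h]
      field_simp
      ring
    · simp [h, h.le, h.ne']
  · by_cases h : ⌊u⌋₊ < s <;> simp [h, hδ]
end

section
/- There exist universal constants c > 0 and c' > 0 such that the following holds for all integers K ≥ 2, V ≥ 1 and T with T·V ≥ c'·K. Consider the dark pool problem with V^t = V for all t, and for each i ∈ {1, …, K} let environment i generate the consumption levels independently across rounds and venues: s_i^t = V with probability 1/2 + ε and s_i^t = 0 otherwise, while for j ≠ i, s_j^t = V with probability 1/2 and s_j^t = 0 otherwise, where ε = (1/4)·√(K/(TV)). Then for every (possibly randomized) allocation strategy that at each round t chooses nonnegative integer allocations (ū_1^t, …, ū_K^t) with Σ_j ū_j^t ≤ V as a function of previously observed consumptions min(ū_j^r, s_j^r) (r < t) and internal randomness, there exists an i ∈ {1, …, K} such that under environment i, E[ Σ_{t=1}^T max_j min(V·1(j = i), s_j^t) aggregated optimally ] minus the strategy's expected total consumption is at least c·√(T·V·K); that is, the expected regret against the best fixed single-venue allocation is Ω(√(TVK)). -/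
/-!
Write `M = TV`, let `P₀` be the uniform law on outcomes and `N_i = ∑_t u_i^t` the number of units
sent to venue `i`. Since the allocation to `(t, j)` does not depend on the outcome at `(t, j)`, the
regret under environment `i` is at least `ε (M - E_i[N_i])` (`reward_le`), so it suffices to bound
`∑_i E_i[N_i]` away from `K M`.

Let `L_i` be the likelihood ratio of environment `i` against `P₀` restricted to the rounds in which
venue `i` receives a positive allocation, i.e. to what the learner actually sees. Flipping an
unobserved outcome changes no allocation, and this gives `E_i[f] = E₀[f L_i]` for every
observable `f` (`sum_observedRatio`). The elementary inequality
`|L - 1| ≤ (6 (L - 1 - log L) + (L + 1) / 3) / 2` replaces Pinsker's inequality; being linear in the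
divergence `-E₀[log L_i] ≤ (8/3) ε² E₀[N_i]` (an observation costs at least one unit), it can be
averaged over the venues and over the internal randomness directly. With `∑_i N_i ≤ M` and
`ε² M = K / 16` this yields `∑_i E_i[N_i] ≤ (11/12) K M`, hence some venue has regret at least
`ε M / 12 = √(TVK) / 48`.
-/

open scoped Classical

/-- The gap parameter `ε = (1/4)·√(K/(TV))`. -/
noncomputable def darkEps (K T V : ℕ) : ℝ :=
  (1 / 4) * Real.sqrt ((K : ℝ) / ((T : ℝ) * V))

/-- Probability, under environment `i`, of the outcome `r`, where `r t j = true`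
means `s_j^t = V` and `r t j = false` means `s_j^t = 0`: the coordinates are
independent, venue `i` succeeds with probability `1/2 + ε` and every other venue
with probability `1/2`. -/
noncomputable def darkMu (K T V : ℕ) (i : Fin K) (r : Fin T → Fin K → Bool) : ℝ :=
  ∏ t : Fin T, ∏ j : Fin K,
    if r t j then (1 / 2 + if j = i then darkEps K T V else 0)
    else (1 / 2 - if j = i then darkEps K T V else 0)

namespace DarkPool

variable {K T : ℕ}

/-! ### Reversing one outcome bit -/

/-- The outcome `r` with the success bit of venue `i` at round `s` reversed. -/
def flip (s : Fin T) (i : Fin K) (r : Fin T → Fin K → Bool) : Fin T → Fin K → Bool :=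
  Function.update r s (Function.update (r s) i (!(r s i)))

lemma flip_same (s : Fin T) (i : Fin K) (r : Fin T → Fin K → Bool) :
    flip s i r s i = !(r s i) := by
  simp [flip]

lemma flip_of_ne (s : Fin T) (i : Fin K) (r : Fin T → Fin K → Bool) (t : Fin T) (j : Fin K)
    (h : ¬ (t = s ∧ j = i)) : flip s i r t j = r t j := by
  unfold flip
  by_cases ht : t = s
  · subst ht
    have hj : j ≠ i := fun hj => h ⟨rfl, hj⟩
    simp [hj]
  · simp [ht]

lemma flip_flip (s : Fin T) (i : Fin K) (r : Fin T → Fin K → Bool) :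
    flip s i (flip s i r) = r := by
  funext t j
  by_cases h : t = s ∧ j = i
  · obtain ⟨rfl, rfl⟩ := h
    simp [flip_same]
  · rw [flip_of_ne _ _ _ _ _ h, flip_of_ne _ _ _ _ _ h]

lemma sum_eq_zero_of_flip (s : Fin T) (i : Fin K) (G : (Fin T → Fin K → Bool) → ℝ)
    (h : ∀ r, G (flip s i r) = - G r) : ∑ r, G r = 0 := by
  have h1 : ∑ r, G (flip s i r) = ∑ r, G r :=
    Equiv.sum_comp (Function.Involutive.toPerm (flip s i) (flip_flip s i)) G
  simp only [h, Finset.sum_neg_distrib] at h1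
  linarith

/-- A deterministic strategy whose allocation at round `t` depends only on the consumptions
observed in the earlier rounds. -/
def Adapted (V : ℕ) (u : (Fin T → Fin K → Bool) → Fin T → Fin K → ℕ) : Prop :=
  ∀ r r' (t : Fin T),
    (∀ t' : Fin T, t' < t → ∀ j,
      min (u r t' j) (if r t' j then V else 0) = min (u r' t' j) (if r' t' j then V else 0)) →
    u r t = u r' t

/-- Reversing the bit at `(s, i)` affects the allocations only after round `s`, and not even then
if venue `i` received nothing at round `s`. -/
lemma Adapted.flip {V : ℕ} {u : (Fin T → Fin K → Bool) → Fin T → Fin K → ℕ}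
    (hu : Adapted V u) (s : Fin T) (i : Fin K) (r : Fin T → Fin K → Bool) (t : Fin T)
    (h : t ≤ s ∨ u r s i = 0) : u (flip s i r) t = u r t := by
  induction t using WellFoundedLT.induction with
  | ind t ih =>
    refine hu _ _ _ fun t' ht' j => ?_
    have e : u (DarkPool.flip s i r) t' = u r t' :=
      ih t' ht' (h.imp (fun h => ht'.le.trans h) id)
    rw [e]
    by_cases hc : t' = s ∧ j = i
    · obtain ⟨rfl, rfl⟩ := hc
      have h0 : u r t' j = 0 := h.resolve_left (not_le.mpr ht')
      simp [h0]
    · rw [flip_of_ne _ _ _ _ _ hc]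

/-! ### Change of measure to the observed data -/

/-- The sign `±1` of a success bit. -/
noncomputable def sgn (b : Bool) : ℝ := if b then 1 else -1

lemma sgn_not (b : Bool) : sgn (!b) = - sgn b := by
  cases b <;> simp [sgn]

/-- The likelihood ratio of environment `i` against the uniform law, restricted to the rounds
before `n` and to those in which venue `i` receives a positive allocation. For `n = 0` it is the
ratio on the observed data, for `n = T` the ratio on complete outcomes. -/
noncomputable def ratio (u : (Fin T → Fin K → Bool) → Fin T → Fin K → ℕ) (i : Fin K) (e : ℝ)
    (n : ℕ) (r : Fin T → Fin K → Bool) : ℝ :=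
  ∏ t : Fin T, if (t : ℕ) < n ∨ u r t i ≠ 0 then 1 + 2 * e * sgn (r t i) else 1

/-- Revealing one more unobserved round does not change the expectation of an observable: the
difference changes sign when the bit of that round is reversed. -/
lemma sum_ratio_succ {V : ℕ} {u : (Fin T → Fin K → Bool) → Fin T → Fin K → ℕ}
    (hu : Adapted V u) (i : Fin K) (e : ℝ) (f : (Fin T → Fin K → Bool) → ℝ)
    (hf : ∀ s r, u r s i = 0 → f (flip s i r) = f r) (n : ℕ) (hn : n < T) :
    ∑ r, ratio u i e (n + 1) r * f r = ∑ r, ratio u i e n r * f r := by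
  rw [← sub_eq_zero, ← Finset.sum_sub_distrib]
  set s : Fin T := ⟨n, hn⟩ with hs
  refine sum_eq_zero_of_flip s i _ fun r => ?_
  have hus : u (flip s i r) s = u r s := hu.flip s i r s (Or.inl le_rfl)
  by_cases h0 : u r s i = 0
  · have hall : ∀ t, u (flip s i r) t = u r t := fun t => hu.flip s i r t (Or.inr h0)
    have hrest : ∀ (r' : Fin T → Fin K → Bool) (m : ℕ), ratio u i e m r' =
        (if (s : ℕ) < m ∨ u r' s i ≠ 0 then 1 + 2 * e * sgn (r' s i) else 1) *
        ∏ t ∈ Finset.univ.erase s,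
          if (t : ℕ) < m ∨ u r' t i ≠ 0 then 1 + 2 * e * sgn (r' t i) else 1 := fun r' m =>
      (Finset.mul_prod_erase Finset.univ _ (Finset.mem_univ s)).symm
    have hstep : ∏ t ∈ Finset.univ.erase s,
          (if (t : ℕ) < n + 1 ∨ u r t i ≠ 0 then 1 + 2 * e * sgn (r t i) else 1) =
        ∏ t ∈ Finset.univ.erase s,
          (if (t : ℕ) < n ∨ u r t i ≠ 0 then 1 + 2 * e * sgn (r t i) else 1) := by
      refine Finset.prod_congr rfl fun t ht => ?_
      have hne : (t : ℕ) ≠ n := fun h => (Finset.mem_erase.mp ht).1 (Fin.ext h)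
      have : (t : ℕ) < n + 1 ↔ (t : ℕ) < n := by omega
      simp only [this]
    have hflip : ∀ m : ℕ, ∏ t ∈ Finset.univ.erase s,
          (if (t : ℕ) < m ∨ u (flip s i r) t i ≠ 0 then
            1 + 2 * e * sgn (flip s i r t i) else 1) =
        ∏ t ∈ Finset.univ.erase s,
          (if (t : ℕ) < m ∨ u r t i ≠ 0 then 1 + 2 * e * sgn (r t i) else 1) := by
      intro m
      refine Finset.prod_congr rfl fun t ht => ?_
      have hne : t ≠ s := (Finset.mem_erase.mp ht).1
      rw [hall, flip_of_ne _ _ _ _ _ (fun h => hne h.1)]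
    rw [hrest _ (n + 1), hrest _ n, hrest r (n + 1), hrest r n, hflip, hflip, hstep, hf s r h0,
      hus, flip_same, sgn_not]
    have hsn : (s : ℕ) = n := rfl
    simp only [hsn, h0, lt_irrefl, Nat.lt_succ_self, ne_eq, not_true_eq_false, or_false,
      if_true, if_false]
    ring
  · have key : ∀ r', u r' s i ≠ 0 → ratio u i e (n + 1) r' = ratio u i e n r' := by
      intro r' hr'
      refine Finset.prod_congr rfl fun t _ => ?_
      by_cases ht : t = s
      · subst ht
        simp [hr']
      · have hne : (t : ℕ) ≠ n := fun h => ht (Fin.ext h)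
        have : (t : ℕ) < n + 1 ↔ (t : ℕ) < n := by omega
        simp only [this]
    rw [key r h0, key _ (by rw [hus]; exact h0)]
    simp

/-- Change of measure: expectations of observables under environment `i` are computed with the
likelihood ratio of the observed data alone. -/
lemma sum_observedRatio {V : ℕ} {u : (Fin T → Fin K → Bool) → Fin T → Fin K → ℕ}
    (hu : Adapted V u) (i : Fin K) (e : ℝ) (f : (Fin T → Fin K → Bool) → ℝ)
    (hf : ∀ s r, u r s i = 0 → f (flip s i r) = f r) :
    ∑ r, (∏ t, (1 + 2 * e * sgn (r t i))) * f r = ∑ r, ratio u i e 0 r * f r := by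
  have h : ∀ n, n ≤ T → ∑ r, ratio u i e n r * f r = ∑ r, ratio u i e 0 r * f r := by
    intro n
    induction n with
    | zero => intro _; rfl
    | succ n ih => intro hn; rw [sum_ratio_succ hu i e f hf n hn, ih (Nat.le_of_succ_le hn)]
  rw [← h T le_rfl]
  refine Finset.sum_congr rfl fun r _ => ?_
  congr 1
  exact Finset.prod_congr rfl fun t _ => by simp [t.isLt]

/-- The complete likelihood ratio has total mass equal to that of the uniform weights: this is the
change of measure for the strategy that never allocates anything. -/
lemma sum_fullRatio (i : Fin K) (e : ℝ) :
    ∑ r : Fin T → Fin K → Bool, ∏ t, (1 + 2 * e * sgn (r t i)) =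
      ∑ _r : Fin T → Fin K → Bool, (1 : ℝ) := by
  have h := sum_observedRatio (V := 0) (u := fun (_ : Fin T → Fin K → Bool) _ _ => 0)
    (fun _ _ _ _ => rfl) i e (fun _ => 1) (fun _ _ _ => rfl)
  simpa [ratio] using h

/-! ### The environments as product laws -/

lemma darkMu_eq (V : ℕ) (i : Fin K) (r : Fin T → Fin K → Bool) :
    darkMu K T V i r = ((1 / 2 : ℝ) ^ K) ^ T *
      ∏ t, (1 + 2 * darkEps K T V * sgn (r t i)) := by
  have h : ∀ t : Fin T, (∏ j : Fin K,
      if r t j then (1 / 2 + if j = i then darkEps K T V else 0)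
      else (1 / 2 - if j = i then darkEps K T V else 0)) =
      (1 / 2 : ℝ) ^ K * (1 + 2 * darkEps K T V * sgn (r t i)) := by
    intro t
    have h1 : ∀ j : Fin K, (if r t j then (1 / 2 + if j = i then darkEps K T V else 0)
      else (1 / 2 - if j = i then darkEps K T V else 0)) =
        (1 / 2) * (if j = i then (1 + 2 * darkEps K T V * sgn (r t j)) else 1) := by
      intro j
      by_cases hj : j = i <;> cases hb : r t j <;> simp [hj, sgn] <;> ring
    rw [Finset.prod_congr rfl fun j _ => h1 j, Finset.prod_mul_distrib,
      Finset.prod_ite_eq']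
    simp
  unfold darkMu
  rw [Finset.prod_congr rfl fun t _ => h t, Finset.prod_mul_distrib]
  simp

lemma uniform_mass : ((1 / 2 : ℝ) ^ K) ^ T * ∑ _r : Fin T → Fin K → Bool, (1 : ℝ) = 1 := by
  simp only [Finset.sum_const, Finset.card_univ, Fintype.card_fun, Fintype.card_bool,
    Fintype.card_fin, nsmul_eq_mul, mul_one]
  push_cast
  rw [← mul_pow, ← mul_pow]
  norm_num

lemma sum_darkMu (V : ℕ) (i : Fin K) : ∑ r, darkMu K T V i r = 1 := by
  simp only [darkMu_eq]
  rw [← Finset.mul_sum, sum_fullRatio, uniform_mass]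

/-- Under environment `i` the success bit at `(t, j)` is independent of every quantity that is
unaffected by reversing it. -/
lemma sum_success (V : ℕ) (i j : Fin K) (t : Fin T) (g : (Fin T → Fin K → Bool) → ℝ)
    (hg : ∀ r, g (flip t j r) = g r) :
    ∑ r, darkMu K T V i r * (if r t j then g r else 0) =
      (1 / 2 + if j = i then darkEps K T V else 0) * ∑ r, darkMu K T V i r * g r := by
  rw [Finset.mul_sum, ← sub_eq_zero, ← Finset.sum_sub_distrib]
  refine sum_eq_zero_of_flip t j _ fun r => ?_
  simp only [darkMu_eq, hg, flip_same]
  rw [← Finset.mul_prod_erase Finset.univ _ (Finset.mem_univ t),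
    ← Finset.mul_prod_erase Finset.univ (fun t => 1 + 2 * darkEps K T V * sgn (r t i))
      (Finset.mem_univ t)]
  have hP : ∏ x ∈ Finset.univ.erase t, (1 + 2 * darkEps K T V * sgn (flip t j r x i)) =
      ∏ x ∈ Finset.univ.erase t, (1 + 2 * darkEps K T V * sgn (r x i)) := by
    refine Finset.prod_congr rfl fun x hx => ?_
    rw [flip_of_ne _ _ _ _ _ (fun h => (Finset.mem_erase.mp hx).1 h.1)]
  rw [hP]
  by_cases hj : j = i
  · subst hj
    rw [flip_same, sgn_not]
    cases r t j <;> simp [sgn] <;> ring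
  · rw [flip_of_ne _ _ _ _ _ (fun h => hj h.2.symm)]
    cases r t j <;> simp [hj] <;> ring

/-! ### Divergence of the observed data -/

/-- A linearised form of Pinsker's inequality: for `x = √L` one has
`(x - 1)² ≤ L - 1 - log L` and `(x + 1)² ≤ 2 (L + 1)`, and the two factors of `L - 1` are
combined by weighted AM-GM. -/
lemma abs_sub_one_le (L : ℝ) (hL : 0 < L) :
    |L - 1| ≤ (6 * (L - 1 - Real.log L) + (L + 1) / 3) / 2 := by
  obtain ⟨x, hx, rfl⟩ : ∃ x : ℝ, 0 < x ∧ L = x ^ 2 :=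
    ⟨√L, Real.sqrt_pos.mpr hL, (Real.sq_sqrt hL.le).symm⟩
  have hlog : Real.log (x ^ 2) ≤ 2 * (x - 1) := by
    rw [Real.log_pow]
    have := Real.log_le_sub_one_of_pos hx
    push_cast
    linarith
  rw [abs_le]
  constructor
  · nlinarith [sq_nonneg (6 * (x - 1) + (x + 1)), sq_nonneg (x - 1)]
  · nlinarith [sq_nonneg (6 * (x - 1) - (x + 1)), sq_nonneg (x - 1)]

/-- The divergence of the observed data is at most `(8/3) ε²` per unit sent to venue `i`, because
each observation costs at least one unit. -/
lemma neg_sum_log_ratio_le {V : ℕ} {u : (Fin T → Fin K → Bool) → Fin T → Fin K → ℕ}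
    (hu : Adapted V u) (i : Fin K) (e : ℝ) (he0 : 0 ≤ e) (he : e ≤ 1 / 4) :
    -∑ r, Real.log (ratio u i e 0 r) ≤ 8 / 3 * e ^ 2 * ∑ r, ∑ t, (u r t i : ℝ) := by
  have hpos : ∀ b, 0 < 1 + 2 * e * sgn b := by
    intro b
    cases b <;> simp [sgn] <;> linarith
  have h1 : ∀ r, Real.log (ratio u i e 0 r) =
      ∑ t, if u r t i ≠ 0 then Real.log (1 + 2 * e * sgn (r t i)) else 0 := by
    intro r
    unfold ratio
    rw [Real.log_prod]
    · refine Finset.sum_congr rfl fun t _ => ?_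
      by_cases h : u r t i = 0 <;> simp [h]
    · intro t _
      split_ifs
      · exact (hpos _).ne'
      · exact one_ne_zero
  -- Averaging over the observed bit gives `log (1 - 4 ε²) / 2` per observation.
  have h2 : ∀ t : Fin T,
      ∑ r, (if u r t i ≠ 0 then Real.log (1 + 2 * e * sgn (r t i)) else 0) =
      ∑ r, (if u r t i ≠ 0 then (Real.log (1 + 2 * e) + Real.log (1 - 2 * e)) / 2 else 0) := by
    intro t
    rw [← sub_eq_zero, ← Finset.sum_sub_distrib]
    refine sum_eq_zero_of_flip t i _ fun r => ?_
    rw [hu.flip t i r t (Or.inl le_rfl), flip_same]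
    by_cases h : u r t i = 0
    · simp [h]
    · cases r t i <;> simp [h, sgn, ← sub_eq_add_neg] <;> ring
  have h3 : -((Real.log (1 + 2 * e) + Real.log (1 - 2 * e)) / 2) ≤ 8 / 3 * e ^ 2 := by
    rw [← Real.log_mul (by linarith) (by linarith)]
    have hq : (0 : ℝ) < (1 + 2 * e) * (1 - 2 * e) := by nlinarith
    have hl := Real.one_sub_inv_le_log_of_pos hq
    have hinv : ((1 + 2 * e) * (1 - 2 * e))⁻¹ ≤ 1 + 16 / 3 * e ^ 2 := by
      rw [inv_le_iff_one_le_mul₀ hq]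
      nlinarith [mul_nonneg (sq_nonneg e) (show (0 : ℝ) ≤ 1 / 16 - e ^ 2 by nlinarith)]
    linarith
  simp only [h1]
  rw [Finset.sum_comm, Finset.sum_congr rfl fun t _ => h2 t, Finset.sum_comm,
    ← Finset.sum_neg_distrib, Finset.mul_sum]
  refine Finset.sum_le_sum fun r _ => ?_
  rw [← Finset.sum_neg_distrib, Finset.mul_sum]
  refine Finset.sum_le_sum fun t _ => ?_
  by_cases h : u r t i = 0
  · simp [h]
  · have hge : (1 : ℝ) ≤ u r t i := by exact_mod_cast Nat.one_le_iff_ne_zero.mpr h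
    simp only [ne_eq, h, not_false_eq_true, if_true]
    nlinarith [sq_nonneg e]

/-- The expected number of units sent to venue `i` under environment `i`, compared with the same
expectation under the uniform law. -/
lemma visits_le {V : ℕ} {u : (Fin T → Fin K → Bool) → Fin T → Fin K → ℕ}
    (hu : Adapted V u) (hV : ∀ r t, ∑ j, u r t j ≤ V) (i : Fin K)
    (he : darkEps K T V ≤ 1 / 4) :
    ∑ r, darkMu K T V i r * ∑ t, (u r t i : ℝ) ≤
      (1 + 4 * ((T : ℝ) * V) * darkEps K T V ^ 2) *
        (((1 / 2 : ℝ) ^ K) ^ T * ∑ r, ∑ t, (u r t i : ℝ)) + (T : ℝ) * V / 6 := by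
  have he0 : 0 ≤ darkEps K T V := by unfold darkEps; positivity
  set e := darkEps K T V with hedef
  set M : ℝ := (T : ℝ) * V with hM
  have hM0 : 0 ≤ M := by positivity
  have hN0 : ∀ r, 0 ≤ ∑ t, (u r t i : ℝ) := fun r => Finset.sum_nonneg fun t _ => by positivity
  have hNM : ∀ r, ∑ t, (u r t i : ℝ) ≤ M := by
    intro r
    have : ∀ t, (u r t i : ℝ) ≤ V := fun t => by
      exact_mod_cast (Finset.single_le_sum (fun j _ => Nat.zero_le (u r t j))
        (Finset.mem_univ i)).trans (hV r t)
    calc ∑ t, (u r t i : ℝ) ≤ ∑ _t : Fin T, (V : ℝ) := Finset.sum_le_sum fun t _ => this t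
      _ = M := by simp [hM]
  have hLpos : ∀ r, 0 < ratio u i e 0 r := by
    intro r
    refine Finset.prod_pos fun t _ => ?_
    split_ifs
    · cases r t i <;> simp [sgn] <;> linarith
    · exact one_pos
  have hchange := sum_observedRatio hu i e (fun r => ∑ t, (u r t i : ℝ)) (by
    intro s r h0
    simp only [hu.flip s i r _ (Or.inr h0)])
  have hmass : ∑ r, ratio u i e 0 r = ∑ _r : Fin T → Fin K → Bool, (1 : ℝ) := by
    have := sum_observedRatio hu i e (fun _ => 1) (fun _ _ _ => rfl)
    simp only [mul_one] at this
    rw [← this, sum_fullRatio]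
  -- `N` is centred at `M / 2`, which halves the range multiplying `|L - 1|`.
  have hpt : ∀ r, ratio u i e 0 r * ∑ t, (u r t i : ℝ) ≤
      ∑ t, (u r t i : ℝ) + M / 2 * (ratio u i e 0 r - 1) +
        M / 4 * (6 * (ratio u i e 0 r - 1 + -Real.log (ratio u i e 0 r)) +
          (ratio u i e 0 r + 1) / 3) := by
    intro r
    have habs := abs_sub_one_le _ (hLpos r)
    set L := ratio u i e 0 r
    set N := ∑ t, (u r t i : ℝ)
    have h1 : (N - M / 2) * (L - 1) ≤ M / 2 * |L - 1| := by
      calc (N - M / 2) * (L - 1) ≤ |(N - M / 2) * (L - 1)| := le_abs_self _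
        _ = |N - M / 2| * |L - 1| := abs_mul _ _
        _ ≤ M / 2 * |L - 1| := by
          refine mul_le_mul_of_nonneg_right ?_ (abs_nonneg _)
          have := hN0 r
          have := hNM r
          rw [abs_le]
          constructor <;> linarith
    have h2 := mul_le_mul_of_nonneg_left habs (by linarith : 0 ≤ M / 2)
    linarith
  have hsum := Finset.sum_le_sum fun r (_ : r ∈ Finset.univ) => hpt r
  simp only [Finset.sum_add_distrib, ← Finset.mul_sum, ← Finset.sum_div,
    Finset.sum_sub_distrib, Finset.sum_neg_distrib, hmass] at hsum
  have hkl := neg_sum_log_ratio_le hu i e he0 he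
  have hh : (0 : ℝ) < ((1 / 2 : ℝ) ^ K) ^ T := by positivity
  have hU := uniform_mass (K := K) (T := T)
  simp only [darkMu_eq, mul_assoc (((1 / 2 : ℝ) ^ K) ^ T)]
  rw [← Finset.mul_sum, ← hedef]
  rw [hchange]
  generalize ((1 / 2 : ℝ) ^ K) ^ T = h at *
  generalize (∑ _r : Fin T → Fin K → Bool, (1 : ℝ)) = U at *
  have h5 := mul_le_mul_of_nonneg_left hkl (by positivity : 0 ≤ 6 * (M / 4))
  have h6 : ∑ r, ratio u i e 0 r * ∑ t, (u r t i : ℝ) ≤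
      (1 + 4 * M * e ^ 2) * ∑ r, ∑ t, (u r t i : ℝ) + M / 6 * U := by
    linarith
  have h7 := mul_le_mul_of_nonneg_left h6 hh.le
  have h8 : M / 6 * (h * U) = M / 6 := by rw [hU, mul_one]
  linarith

/-! ### Rewards and regret -/

/-- The expected reward of a deterministic strategy under environment `i`: every unit sent is worth
at most `1/2`, plus `ε` if it goes to venue `i`. -/
lemma reward_le {V : ℕ} {u : (Fin T → Fin K → Bool) → Fin T → Fin K → ℕ}
    (hu : Adapted V u) (hV : ∀ r t, ∑ j, u r t j ≤ V) (i : Fin K)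
    (he : darkEps K T V ≤ 1 / 4) :
    ∑ r, darkMu K T V i r *
        ∑ t, ∑ j, ((min (u r t j) (if r t j then V else 0) : ℕ) : ℝ) ≤
      (T : ℝ) * V / 2 + darkEps K T V * ∑ r, darkMu K T V i r * ∑ t, (u r t i : ℝ) := by
  have he0 : 0 ≤ darkEps K T V := by unfold darkEps; positivity
  have hmu : ∀ r, 0 ≤ darkMu K T V i r := by
    intro r
    rw [darkMu_eq]
    refine mul_nonneg (by positivity) (Finset.prod_nonneg fun t _ => ?_)
    cases r t i <;> simp [sgn] <;> linarith
  have hmin : ∀ r t j, ((min (u r t j) (if r t j then V else 0) : ℕ) : ℝ) =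
      if r t j then (u r t j : ℝ) else 0 := by
    intro r t j
    have : u r t j ≤ V :=
      (Finset.single_le_sum (fun j _ => Nat.zero_le (u r t j)) (Finset.mem_univ j)).trans (hV r t)
    cases r t j <;> simp [this]
  have hexp : ∑ r, darkMu K T V i r *
        ∑ t, ∑ j, ((min (u r t j) (if r t j then V else 0) : ℕ) : ℝ) =
      ∑ t, ∑ j, (1 / 2 + if j = i then darkEps K T V else 0) *
        ∑ r, darkMu K T V i r * (u r t j : ℝ) := by
    simp only [hmin, Finset.mul_sum (s := (Finset.univ : Finset (Fin T))),
      Finset.mul_sum (s := (Finset.univ : Finset (Fin K)))]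
    rw [Finset.sum_comm]
    refine Finset.sum_congr rfl fun t _ => ?_
    rw [Finset.sum_comm]
    refine Finset.sum_congr rfl fun j _ => ?_
    exact sum_success V i j t (fun r => (u r t j : ℝ)) fun r => by
      rw [hu.flip t j r t (Or.inl le_rfl)]
  rw [hexp]
  have ht : ∀ t, ∑ j, (1 / 2 + if j = i then darkEps K T V else 0) *
        ∑ r, darkMu K T V i r * (u r t j : ℝ) ≤
      (V : ℝ) / 2 + darkEps K T V * ∑ r, darkMu K T V i r * (u r t i : ℝ) := by
    intro t
    simp only [add_mul, Finset.sum_add_distrib, ite_mul, zero_mul, Finset.sum_ite_eq',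
      Finset.mem_univ, if_true]
    have hsum : ∑ j, ∑ r, darkMu K T V i r * (u r t j : ℝ) ≤ V := by
      rw [Finset.sum_comm]
      calc ∑ r, ∑ j, darkMu K T V i r * (u r t j : ℝ) ≤ ∑ r, darkMu K T V i r * V := by
            refine Finset.sum_le_sum fun r _ => ?_
            rw [← Finset.mul_sum]
            exact mul_le_mul_of_nonneg_left (by exact_mod_cast hV r t) (hmu r)
        _ = V := by rw [← Finset.sum_mul, sum_darkMu, one_mul]
    rw [← Finset.mul_sum]
    linarith
  calc _ ≤ ∑ t : Fin T, ((V : ℝ) / 2 + darkEps K T V *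
        ∑ r, darkMu K T V i r * (u r t i : ℝ)) := Finset.sum_le_sum fun t _ => ht t
    _ = _ := by
      rw [Finset.sum_add_distrib, ← Finset.mul_sum, Finset.sum_comm]
      simp only [Finset.mul_sum]
      simp
      ring

/-- The expected reward of the strategy that sends everything to venue `i`, under
environment `i`. -/
lemma benchmark_eq (V : ℕ) (i : Fin K) :
    ∑ r : Fin T → Fin K → Bool, darkMu K T V i r *
        ∑ t : Fin T, ((min V (if r t i then V else 0) : ℕ) : ℝ) =
      (T : ℝ) * V * (1 / 2 + darkEps K T V) := by
  have hmin : ∀ (r : Fin T → Fin K → Bool) t,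
      ((min V (if r t i then V else 0) : ℕ) : ℝ) = if r t i then (V : ℝ) else 0 := by
    intro r t
    cases r t i <;> simp
  simp only [hmin, Finset.mul_sum]
  rw [Finset.sum_comm]
  have := fun t : Fin T => sum_success V i i t (fun _ => (V : ℝ)) (fun _ => rfl)
  simp only [this, ← Finset.sum_mul, sum_darkMu]
  simp
  ring

end DarkPool

/-- Lower bound for integral allocations: there are universal constants `c, c' > 0`
such that for all `K ≥ 2`, `V ≥ 1` and `T` with `TV ≥ c'K`, every (possibly
randomized) strategy — choosing at round `t` nonnegative integer allocations summing
to at most `V` as a function of its internal randomness and the consumptions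
observed at earlier rounds — suffers, under some environment `i`, expected regret at
least `c·√(TVK)` against the best fixed single-venue allocation (which puts all `V`
units on venue `i` every round). -/
theorem stmt_16 : ∃ c c' : ℝ, 0 < c ∧ 0 < c' ∧
    ∀ (K V T : ℕ), 2 ≤ K → 1 ≤ V → c' * K ≤ (T : ℝ) * V →
      ∀ (Rnd : Type) (_ : Fintype Rnd) (ρ : Rnd → ℝ),
        (∀ a, 0 ≤ ρ a) → (∑ a, ρ a = 1) →
        ∀ alloc : Rnd → (Fin T → Fin K → Bool) → Fin T → Fin K → ℕ,
          (∀ a r t, ∑ j, alloc a r t j ≤ V) →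
          (∀ a r r' (t : Fin T),
            (∀ t' : Fin T, t' < t → ∀ j,
              min (alloc a r t' j) (if r t' j then V else 0)
                = min (alloc a r' t' j) (if r' t' j then V else 0)) →
            alloc a r t = alloc a r' t) →
          ∃ i : Fin K,
            (∑ r : Fin T → Fin K → Bool, darkMu K T V i r *
                ∑ t : Fin T, ((min V (if r t i then V else 0) : ℕ) : ℝ))
              - (∑ a : Rnd, ρ a * ∑ r : Fin T → Fin K → Bool, darkMu K T V i r *
                  ∑ t : Fin T, ∑ j : Fin K,
                    ((min (alloc a r t j) (if r t j then V else 0) : ℕ) : ℝ))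
              ≥ c * Real.sqrt ((T : ℝ) * V * K) := by
  refine ⟨1 / 48, 1, by norm_num, by norm_num, ?_⟩
  intro K V T hK hV hTV Rnd _ ρ hρ0 hρ1 alloc hsum had
  set M : ℝ := (T : ℝ) * V with hM
  have hK2 : (2 : ℝ) ≤ K := by exact_mod_cast hK
  have hMK : (K : ℝ) ≤ M := by linarith
  have hM0 : 0 < M := by linarith
  set e := darkEps K T V with he
  have he0 : 0 ≤ e := by rw [he]; unfold darkEps; positivity
  have he4 : e ≤ 1 / 4 := by
    have : Real.sqrt ((K : ℝ) / M) ≤ 1 := by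
      exact Real.sqrt_le_one.mpr ((div_le_one hM0).mpr hMK)
    rw [he]
    unfold darkEps
    rw [← hM]
    linarith
  have hesq : e ^ 2 * M = K / 16 := by
    rw [he]
    unfold darkEps
    rw [← hM, mul_pow, Real.sq_sqrt (by positivity)]
    field_simp
    norm_num
  have heM : e * M = 1 / 4 * Real.sqrt (M * K) := by
    have h1 : (e * M) ^ 2 = (1 / 4 * Real.sqrt (M * K)) ^ 2 := by
      rw [mul_pow (1 / 4 : ℝ), Real.sq_sqrt (by positivity)]
      linear_combination M * hesq
    exact (pow_left_inj₀ (by positivity) (by positivity) two_ne_zero).mp h1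
  by_contra! hcon
  set E : Fin K → Rnd → ℝ := fun i a =>
    ∑ r : Fin T → Fin K → Bool, darkMu K T V i r * ∑ t : Fin T, (alloc a r t i : ℝ) with hE
  have hreg : ∀ i : Fin K, e * (M - ∑ a, ρ a * E i a) < 1 / 48 * Real.sqrt (M * K) := by
    intro i
    refine lt_of_le_of_lt ?_ (hcon i)
    rw [DarkPool.benchmark_eq]
    have hrew : ∑ a, ρ a * ∑ r : Fin T → Fin K → Bool, darkMu K T V i r *
        ∑ t, ∑ j, ((min (alloc a r t j) (if r t j then V else 0) : ℕ) : ℝ) ≤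
        ∑ a, ρ a * (M / 2 + e * E i a) :=
      Finset.sum_le_sum fun a _ => mul_le_mul_of_nonneg_left
        (DarkPool.reward_le (had a) (hsum a) i he4) (hρ0 a)
    have hsplit : ∑ a, ρ a * (M / 2 + e * E i a) = M / 2 + e * ∑ a, ρ a * E i a := by
      simp only [mul_add, Finset.sum_add_distrib, ← Finset.sum_mul, hρ1, one_mul,
        Finset.mul_sum]
      congr 1
      exact Finset.sum_congr rfl fun a _ => by ring
    rw [hsplit] at hrew
    linarith
  have hvis : ∀ a, ∑ i, E i a ≤ 11 / 12 * (K * M) := by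
    intro a
    have h1 : ∑ i, E i a ≤ ∑ i : Fin K, ((1 + 4 * M * e ^ 2) *
        (((1 / 2 : ℝ) ^ K) ^ T * ∑ r, ∑ t, (alloc a r t i : ℝ)) + M / 6) :=
      Finset.sum_le_sum fun i _ => DarkPool.visits_le (had a) (hsum a) i he4
    have h2 : ∑ i : Fin K, ∑ r, ∑ t, (alloc a r t i : ℝ) ≤
        M * ∑ _r : Fin T → Fin K → Bool, (1 : ℝ) := by
      rw [Finset.sum_comm, Finset.mul_sum]
      refine Finset.sum_le_sum fun r _ => ?_
      rw [Finset.sum_comm]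
      calc ∑ t, ∑ i, (alloc a r t i : ℝ) ≤ ∑ _t : Fin T, (V : ℝ) :=
            Finset.sum_le_sum fun t _ => by exact_mod_cast hsum a r t
        _ = M * 1 := by simp [hM]
    have h3 : ((1 / 2 : ℝ) ^ K) ^ T * ∑ i : Fin K, ∑ r, ∑ t, (alloc a r t i : ℝ) ≤ M := by
      refine (mul_le_mul_of_nonneg_left h2 (by positivity)).trans_eq ?_
      rw [mul_left_comm, DarkPool.uniform_mass, mul_one]
    have h4 : 4 * M * e ^ 2 = K / 4 := by linear_combination 4 * hesq
    rw [Finset.sum_add_distrib, ← Finset.mul_sum, ← Finset.mul_sum, h4] at h1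
    simp only [Finset.sum_const, Finset.card_univ, Fintype.card_fin, nsmul_eq_mul] at h1
    have h5 := mul_le_mul_of_nonneg_left h3 (by positivity : (0 : ℝ) ≤ 1 + K / 4)
    -- The summand `M` is at most `K M / 2` since `K ≥ 2`; `1/2 + 1/4 + 1/6 = 11/12`.
    nlinarith
  have havg : ∑ i : Fin K, ∑ a, ρ a * E i a ≤ 11 / 12 * (K * M) := by
    rw [Finset.sum_comm]
    calc ∑ a, ∑ i, ρ a * E i a ≤ ∑ a, ρ a * (11 / 12 * (K * M)) := by
          refine Finset.sum_le_sum fun a _ => ?_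
          rw [← Finset.mul_sum]
          exact mul_le_mul_of_nonneg_left (hvis a) (hρ0 a)
      _ = 11 / 12 * (K * M) := by rw [← Finset.sum_mul, hρ1, one_mul]
  have htot := Finset.sum_lt_sum_of_nonempty
    (⟨⟨0, by omega⟩, Finset.mem_univ _⟩ : (Finset.univ : Finset (Fin K)).Nonempty)
    (fun i _ => hreg i)
  rw [← Finset.mul_sum, Finset.sum_sub_distrib] at htot
  simp only [Finset.sum_const, Finset.card_univ, Fintype.card_fin, nsmul_eq_mul] at htot
  have h1 := mul_le_mul_of_nonneg_left havg he0
  have h2 : e * (K * M) = K * (1 / 4 * Real.sqrt (M * K)) := by rw [← heM]; ring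
  linarith
end
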